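/- Let V be a finite type and let w be a weight function on V whose support graph (the simple graph in which u and v are adjacent iff w u v ≠ 0) is not bipartite. Then the real matrices L_w and Q_w have different ranks, and consequently there is no unitary complex V×V matrix U with Q_w = U · L_w · U†; in particular the trace-normalized states L_w/tr L_w and Q_w/tr Q_w are not unitarily equivalent. -/

import Mathlib

open Matrix

/-- Adjacency matrix of a weight function. -/
def adjW {V : Type*} (w : V → V → ℝ) : Matrix V V ℝ := Matrix.of w

/-- Degree matrix of a weight function. -/
noncomputable def degW {V : Type*} [Fintype V] [DecidableEq V] (w : V → V → ℝ) :
    Matrix V V ℝ :=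
  Matrix.diagonal fun v => ∑ u, w v u

theorem rank_map_complex {V : Type*} [Fintype V] [DecidableEq V] (M : Matrix V V ℝ) :
    (M.map (fun a => (a : ℂ))).rank = M.rank := by
  classical
  obtain ⟨P, Q, e, hP, hQ, h⟩ := Matrix.exists_rank_normal_form M
  have hd : P * M * Q = diagonal (Sum.elim (fun _ => (1 : ℝ)) (fun _ => 0) ∘ e) := by
    rw [h, ← diagonal_one, ← diagonal_zero, fromBlocks_diagonal, submatrix_diagonal_equiv]
  have hP' : IsUnit (P.map (Complex.ofRealHom)).det := by
    have := ((isUnit_iff_isUnit_det _).1 hP).map Complex.ofRealHom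
    rwa [RingHom.map_det] at this
  have hQ' : IsUnit (Q.map (Complex.ofRealHom)).det := by
    have := ((isUnit_iff_isUnit_det _).1 hQ).map Complex.ofRealHom
    rwa [RingHom.map_det] at this
  have h1 : M.rank = (P * M * Q).rank := by
    rw [rank_mul_eq_left_of_isUnit_det _ _ ((isUnit_iff_isUnit_det _).1 hQ),
      rank_mul_eq_right_of_isUnit_det _ _ ((isUnit_iff_isUnit_det _).1 hP)]
  have h2 : (M.map Complex.ofRealHom).rank = ((P * M * Q).map Complex.ofRealHom).rank := by
    rw [Matrix.map_mul, Matrix.map_mul, rank_mul_eq_left_of_isUnit_det _ _ hQ',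
      rank_mul_eq_right_of_isUnit_det _ _ hP']
  change (M.map Complex.ofRealHom).rank = _
  rw [h2, h1, hd, diagonal_map (by simp), rank_diagonal, rank_diagonal]
  simp

theorem ker_iff {V : Type*} [Fintype V] [DecidableEq V]
    (w : V → V → ℝ) (s : ℝ) (hs : s * s = 1)
    (hw_symm : ∀ u v, w u v = w v u) (hw_nonneg : ∀ u v, 0 ≤ w u v) (f : V → ℝ) :
    (degW w + s • adjW w) *ᵥ f = 0 ↔ ∀ u v, w u v ≠ 0 → f u + s * f v = 0 := by
  have key : ∀ u, ((degW w + s • adjW w) *ᵥ f) u = ∑ v, w u v * (f u + s * f v) := by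
    intro u
    rw [add_mulVec, smul_mulVec]
    simp only [Pi.add_apply, Pi.smul_apply, degW, adjW, mulVec_diagonal, smul_eq_mul]
    simp only [mulVec,
      dotProduct, of_apply, mul_add, Finset.sum_add_distrib, Finset.sum_mul, Finset.mul_sum]
    congr 1
    exact Finset.sum_congr rfl fun _ _ => by ring
  constructor
  · intro h
    have h0 : ∑ u, ∑ v, w u v * (f u + s * f v) ^ 2 = 0 := by
      have h1 : ∑ u, ∑ v, w u v * (f u + s * f v) * f u = 0 := by
        refine Finset.sum_eq_zero fun u _ => ?_
        rw [← Finset.sum_mul, ← key, h]; simp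
      have h2 : ∑ u, ∑ v, w u v * (f u + s * f v) * (s * f v) = 0 := by
        rw [← h1, Finset.sum_comm]
        refine Finset.sum_congr rfl fun u _ => Finset.sum_congr rfl fun v _ => ?_
        rw [hw_symm v u]
        linear_combination (w u v * f u * f u) * hs
      have h3 := congrArg₂ (· + ·) h1 h2
      simp only [← Finset.sum_add_distrib, add_zero] at h3
      rw [← h3]
      refine Finset.sum_congr rfl fun u _ => Finset.sum_congr rfl fun v _ => ?_
      ring
    intro u v huv
    have nn : ∀ u v, 0 ≤ w u v * (f u + s * f v) ^ 2 :=
      fun u v => mul_nonneg (hw_nonneg _ _) (sq_nonneg _)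
    have h4 := (Finset.sum_eq_zero_iff_of_nonneg
      (fun u _ => Finset.sum_nonneg fun v _ => nn u v)).1 h0 u (Finset.mem_univ _)
    have h5 := (Finset.sum_eq_zero_iff_of_nonneg (fun v _ => nn u v)).1 h4 v (Finset.mem_univ _)
    simpa [huv] using h5
  · intro h
    funext u
    rw [key]
    refine Finset.sum_eq_zero fun v _ => ?_
    by_cases huv : w u v = 0
    · simp [huv]
    · simp [h u v huv]

theorem rank_lt_aux {V : Type*} [Fintype V] [DecidableEq V]
    (w : V → V → ℝ)
    (hw_symm : ∀ u v, w u v = w v u) (hw_nonneg : ∀ u v, 0 ≤ w u v)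
    (hnotbip : ¬ ∃ c : V → Bool, ∀ u v, w u v ≠ 0 → c u ≠ c v) :
    (degW w - adjW w).rank ≠ (degW w + adjW w).rank := by
  intro hrank
  have hL : ∀ f : V → ℝ, f ∈ LinearMap.ker (degW w - adjW w).mulVecLin ↔
      ∀ u v, w u v ≠ 0 → f u = f v := by
    intro f
    have := ker_iff w (-1) (by norm_num) hw_symm hw_nonneg f
    simp only [neg_smul, one_smul, ← sub_eq_add_neg, neg_mul, one_mul, sub_eq_zero] at this
    rwa [LinearMap.mem_ker, mulVecLin_apply]
  have hQ : ∀ f : V → ℝ, f ∈ LinearMap.ker (degW w + adjW w).mulVecLin ↔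
      ∀ u v, w u v ≠ 0 → f u = - f v := by
    intro f
    have := ker_iff w 1 (by norm_num) hw_symm hw_nonneg f
    simp only [one_smul, one_mul, add_eq_zero_iff_eq_neg] at this
    rwa [LinearMap.mem_ker, mulVecLin_apply]
  have hfin : Module.finrank ℝ (LinearMap.ker (degW w + adjW w).mulVecLin) =
      Module.finrank ℝ (LinearMap.ker (degW w - adjW w).mulVecLin) := by
    have h1 := LinearMap.finrank_range_add_finrank_ker (degW w - adjW w).mulVecLin
    have h2 := LinearMap.finrank_range_add_finrank_ker (degW w + adjW w).mulVecLin
    unfold Matrix.rank at hrank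
    omega
  -- representatives of connected components
  let r : V → V := fun v => (Quot.mk (fun a b => w a b ≠ 0) v).out
  have hr : ∀ u v, w u v ≠ 0 → r u = r v := by
    intro u v huv
    have : Quot.mk (fun a b => w a b ≠ 0) u = Quot.mk (fun a b => w a b ≠ 0) v := Quot.sound huv
    simp only [r, this]
  have habs : ∀ f ∈ LinearMap.ker (degW w + adjW w).mulVecLin, ∀ v, |f (r v)| = |f v| := by
    intro f hf v
    let g : Quot (fun a b => w a b ≠ 0) → ℝ := Quot.lift (fun v => |f v|) (by
      intro a b hab
      simp only [(hQ f).1 hf a b hab, abs_neg])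
    have h := congrArg g (Quot.out_eq (Quot.mk (fun a b => w a b ≠ 0) v))
    rw [← Quot.out_eq (Quot.mk (fun a b => w a b ≠ 0) v)] at h
    have h' : g (Quot.mk _ (r v)) = g (Quot.mk _ v) :=
      congrArg g (Quot.out_eq (Quot.mk (fun a b => w a b ≠ 0) v))
    exact h'
  let T : LinearMap.ker (degW w + adjW w).mulVecLin →ₗ[ℝ]
      LinearMap.ker (degW w - adjW w).mulVecLin :=
    { toFun := fun f => ⟨fun v => f.1 (r v), (hL _).2 fun u v huv => by rw [hr u v huv]⟩
      map_add' := fun f g => rfl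
      map_smul' := fun c f => rfl }
  have hinj : Function.Injective T := by
    rw [← LinearMap.ker_eq_bot, LinearMap.ker_eq_bot']
    intro f hf
    apply Subtype.ext
    funext v
    have h1 : f.1 (r v) = 0 := congrFun (congrArg Subtype.val hf) v
    have h2 := habs f.1 f.2 v
    rw [h1, abs_zero] at h2
    exact abs_eq_zero.1 h2.symm
  have hsurj := (LinearMap.injective_iff_surjective_of_finrank_eq_finrank hfin).1 hinj
  obtain ⟨f, hf⟩ := hsurj ⟨fun _ => 1, (hL _).2 fun _ _ _ => rfl⟩
  have h1 : ∀ v, |f.1 v| = 1 := by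
    intro v
    rw [← habs f.1 f.2 v]
    have : f.1 (r v) = 1 := congrFun (congrArg Subtype.val hf) v
    rw [this, abs_one]
  refine hnotbip ⟨fun v => decide (0 < f.1 v), fun u v huv hc => ?_⟩
  have h2 := (hQ f.1).1 f.2 u v huv
  have h3 : (0 < f.1 u) ↔ (0 < f.1 v) := by simpa using hc
  rcases (abs_eq zero_le_one).1 (h1 u) with h | h <;>
  rcases (abs_eq zero_le_one).1 (h1 v) with h' | h' <;>
  · rw [h, h'] at h2 h3
    first | (norm_num at h2; done) | (norm_num at h3; done)

/-- If the support graph of a weight function `w` is not bipartite, then the weighted signed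
and signless Laplacians `L_w` and `Q_w` have different ranks; hence no unitary `U` conjugates
(the complexification of) `L_w` into `Q_w`, and the trace-normalized states are not unitarily
equivalent. -/
theorem weighted_lapL_lapQ_not_unitarily_equivalent {V : Type*} [Fintype V] [DecidableEq V]
    (w : V → V → ℝ)
    (hw_symm : ∀ u v, w u v = w v u) (hw_nonneg : ∀ u v, 0 ≤ w u v)
    (hw_diag : ∀ v, w v v = 0)
    (hnotbip : ¬ ∃ c : V → Bool, ∀ u v, w u v ≠ 0 → c u ≠ c v) :
    (degW w - adjW w).rank ≠ (degW w + adjW w).rank ∧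
    (¬ ∃ U : Matrix V V ℂ, star U * U = 1 ∧ U * star U = 1 ∧
        (degW w + adjW w).map (fun a => (a : ℂ)) =
          U * (degW w - adjW w).map (fun a => (a : ℂ)) * star U) ∧
    (¬ ∃ U : Matrix V V ℂ, star U * U = 1 ∧ U * star U = 1 ∧
        (((degW w + adjW w).map fun a => (a : ℂ)).trace)⁻¹ •
            ((degW w + adjW w).map fun a => (a : ℂ)) =
          U * ((((degW w - adjW w).map fun a => (a : ℂ)).trace)⁻¹ •
            ((degW w - adjW w).map fun a => (a : ℂ))) * star U) := by
  have hrank := rank_lt_aux w hw_symm hw_nonneg hnotbip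
  have hno : ¬ ∃ U : Matrix V V ℂ, star U * U = 1 ∧ U * star U = 1 ∧
        (degW w + adjW w).map (fun a => (a : ℂ)) =
          U * (degW w - adjW w).map (fun a => (a : ℂ)) * star U := by
    rintro ⟨U, h1, h2, h⟩
    apply hrank
    have hU : IsUnit U.det := (isUnit_iff_isUnit_det _).1 (IsUnit.of_mul_eq_one _ h2)
    have hU' : IsUnit (star U).det := (isUnit_iff_isUnit_det _).1 (IsUnit.of_mul_eq_one _ h1)
    rw [← rank_map_complex, ← rank_map_complex, h, rank_mul_eq_left_of_isUnit_det _ _ hU',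
      rank_mul_eq_right_of_isUnit_det _ _ hU]
  refine ⟨hrank, hno, ?_⟩
  rintro ⟨U, h1, h2, h⟩
  have htr : ∀ s : ℝ, ((degW w + s • adjW w).map fun a => (a : ℂ)).trace =
      ((∑ v, ∑ u, w v u : ℝ) : ℂ) := by
    intro s
    simp [Matrix.trace, degW, adjW, hw_diag]
  have htQ := htr 1
  have htL := htr (-1)
  simp only [neg_smul, one_smul, ← sub_eq_add_neg] at htQ htL
  have hne : ((∑ v, ∑ u, w v u : ℝ) : ℂ) ≠ 0 := by
    intro h0
    rw [Complex.ofReal_eq_zero] at h0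
    refine hnotbip ⟨fun _ => true, fun u v huv => ?_⟩
    have h4 := (Finset.sum_eq_zero_iff_of_nonneg
      (fun u _ => Finset.sum_nonneg fun v _ => hw_nonneg u v)).1 h0 u (Finset.mem_univ _)
    exact absurd ((Finset.sum_eq_zero_iff_of_nonneg
      (fun v _ => hw_nonneg u v)).1 h4 v (Finset.mem_univ _)) huv
  rw [htQ, htL, Matrix.mul_smul, Matrix.smul_mul] at h
  exact hno ⟨U, h1, h2, smul_right_injective _ (inv_ne_zero hne) h⟩
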